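/- Let G be a distance-regular graph of diameter 3 with intersection array {k, b₁, b₂; 1, c₂, c₃}, let q ≠ 0 be a real number, and let v be a nonzero real vector with Av = θv. Then 𝔻_q v = μ·v, where μ = (1/(c₂c₃q²))·( ((q²+q+1)a₂ − (q²+q)c₃)k + (q²c₂c₃ − (q²+q)a₁c₃ + (q²+q+1)(a₁a₂ − b₁c₂ − k))θ + ((q²+q)c₃ − (q²+q+1)(a₁+a₂))θ² + (q²+q+1)θ³ ). -/

import Mathlib

open Matrix

variable {V : Type*} [Fintype V] [DecidableEq V]

/-- The distance-`i` matrix of a graph: the `(x,y)` entry is 1 if `dist x y = i`, else 0. -/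
noncomputable def distM (G : SimpleGraph V) (i : ℕ) : Matrix V V ℝ :=
  Matrix.of fun x y => if G.dist x y = i then (1 : ℝ) else 0

/-- The `q`-distance matrix `𝔻_q = ∑_{i=1}^D (1 + 1/q + ⋯ + 1/q^{i-1}) • A_i`. -/
noncomputable def qDist (G : SimpleGraph V) (D : ℕ) (q : ℝ) : Matrix V V ℝ :=
  ∑ i ∈ Finset.Icc 1 D, (∑ j ∈ Finset.range i, (1 / q) ^ j) • distM G i

/-- `G` is distance-regular with diameter `D` and intersection numbers `b i`, `c i`
(with `c 1 = 1`): for any vertices `x, y` at distance `i ≤ D`, the number of neighbors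
of `y` at distance `i - 1` from `x` is `c i` and the number of neighbors of `y` at
distance `i + 1` from `x` is `b i`. -/
def IsDRG (G : SimpleGraph V) (D : ℕ) (b c : ℕ → ℕ) : Prop :=
  G.Connected ∧
  (∀ x y : V, G.dist x y ≤ D) ∧
  (∃ x y : V, G.dist x y = D) ∧
  c 1 = 1 ∧
  ∀ i ≤ D, ∀ x y : V, G.dist x y = i →
    ({z : V | G.Adj y z ∧ G.dist x z = i - 1} : Set V).ncard = c i ∧
    ({z : V | G.Adj y z ∧ G.dist x z = i + 1} : Set V).ncard = b i

/-- `a i = k - b i - c i` as a real number, where `k = b 0`. -/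
noncomputable def aInt (b c : ℕ → ℕ) (i : ℕ) : ℝ := (b 0 : ℝ) - (b i : ℝ) - (c i : ℝ)

/-! In a distance-regular graph `(A_i A)_{xy}` counts the neighbours of `y` at distance `i` from
`x`, which gives the three-term recurrence
`A_{i+1} A = b_i A_i + a_{i+1} A_{i+1} + c_{i+2} A_{i+2}`. Since `c_i ≠ 0` for `1 ≤ i ≤ D`, it can
be solved for `A_{i+2}`: every `A_i` is a polynomial `p_i(A)`. An eigenvector of `A` for `θ` is
therefore an eigenvector of any linear combination `∑ w_i A_i`, with eigenvalue `∑ w_i p_i(θ)`;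
for diameter three and the weights of `𝔻_q` this sum is the stated cubic in `θ`. -/

open Polynomial

lemma aeval_mulVec_of_mulVec_eq_smul {R n : Type*} [CommRing R] [Fintype n] [DecidableEq n]
    {M : Matrix n n R} {θ : R} {v : n → R} (hv : M *ᵥ v = θ • v) (p : R[X]) :
    aeval M p *ᵥ v = p.eval θ • v := by
  rw [← Matrix.toLinAlgEquiv'_apply, ← aeval_algHom_apply]
  exact Module.End.aeval_apply_of_mem_apply_eq_smul hv

section NeighborCounts

variable {W : Type*} {G : SimpleGraph W} {D i j : ℕ} {b c : ℕ → ℕ} {x y : W}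

/-- The set `Γ(y) ∩ Γ_j(x)` of neighbours of `y` at distance `j` from `x`, whose cardinalities are
the intersection numbers of a distance-regular graph. -/
def neighborsAtDist (G : SimpleGraph W) (x y : W) (j : ℕ) : Set W :=
  {z | G.Adj y z ∧ G.dist x z = j}

lemma neighborsAtDist_eq_empty (h : G.dist x y + 1 < j ∨ j + 1 < G.dist x y) :
    neighborsAtDist G x y j = ∅ := by
  refine Set.eq_empty_of_forall_notMem fun z ⟨hyz, hxz⟩ ↦ ?_
  have := hyz.diff_dist_adj (u := x)
  lia

lemma disjoint_neighborsAtDist (h : i ≠ j) :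
    Disjoint (neighborsAtDist G x y i) (neighborsAtDist G x y j) :=
  Set.disjoint_left.2 fun _ hi hj ↦ h (hi.2.symm.trans hj.2)

lemma neighborSet_eq_union_neighborsAtDist (h : G.dist x y = i + 1) :
    G.neighborSet y =
      neighborsAtDist G x y i ∪ neighborsAtDist G x y (i + 1) ∪ neighborsAtDist G x y (i + 2) := by
  ext z
  simp only [neighborsAtDist, SimpleGraph.mem_neighborSet, Set.mem_union, Set.mem_ofPred_eq,
    ← and_or_left, iff_self_and]
  intro hyz
  have := hyz.diff_dist_adj (u := x)
  lia

lemma exists_mem_neighborsAtDist_of_lt_dist (h : i < G.dist x y) :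
    ∃ z w, G.dist x z = i + 1 ∧ w ∈ neighborsAtDist G x z i := by
  obtain ⟨p, hp⟩ := G.exists_walk_of_dist_ne_zero (Nat.ne_zero_of_lt h)
  have dist_getVert {m : ℕ} (hm : m ≤ p.length) : G.dist x (p.getVert m) = m := by
    rw [← SimpleGraph.length_eq_dist_of_subwalk hp (p.isSubwalk_take m), p.take_length,
      min_eq_left hm]
  exact ⟨p.getVert (i + 1), p.getVert i, dist_getVert (by lia),
    (p.adj_getVert_succ (by lia)).symm, dist_getVert (by lia)⟩

namespace IsDRG

lemma ncard_neighborsAtDist_pred (hG : IsDRG G D b c) (h : G.dist x y = i + 1) :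
    (neighborsAtDist G x y i).ncard = c (i + 1) :=
  (hG.2.2.2.2 (i + 1) (h ▸ hG.2.1 x y) x y h).1

lemma ncard_neighborsAtDist_succ (hG : IsDRG G D b c) (h : G.dist x y = i) :
    (neighborsAtDist G x y (i + 1)).ncard = b i :=
  (hG.2.2.2.2 i (h ▸ hG.2.1 x y) x y h).2

lemma ncard_neighborSet (hG : IsDRG G D b c) (y : W) : (G.neighborSet y).ncard = b 0 := by
  rw [← hG.ncard_neighborsAtDist_succ (G.dist_self (v := y))]
  simp [neighborsAtDist, SimpleGraph.neighborSet]

variable [Finite W]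

lemma ncard_neighborsAtDist_self (hG : IsDRG G D b c) (h : G.dist x y = i + 1) :
    ((neighborsAtDist G x y (i + 1)).ncard : ℝ) = aInt b c (i + 1) := by
  have degree_eq : c (i + 1) + (neighborsAtDist G x y (i + 1)).ncard + b (i + 1) = b 0 := by
    rw [← hG.ncard_neighborSet y, neighborSet_eq_union_neighborsAtDist h,
      Set.ncard_union_eq (Set.disjoint_union_left.2
        ⟨disjoint_neighborsAtDist (by lia), disjoint_neighborsAtDist (by lia)⟩),
      Set.ncard_union_eq (disjoint_neighborsAtDist (by lia)),
      hG.ncard_neighborsAtDist_pred h, hG.ncard_neighborsAtDist_succ h]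
  rw [aInt, ← degree_eq]
  push_cast
  ring

lemma c_succ_ne_zero (hG : IsDRG G D b c) (hi : i < D) : c (i + 1) ≠ 0 := by
  obtain ⟨x, y, hxy⟩ := hG.2.2.1
  obtain ⟨z, w, hxz, hw⟩ := exists_mem_neighborsAtDist_of_lt_dist (hxy ▸ hi)
  rw [← hG.ncard_neighborsAtDist_pred hxz]
  exact Set.ncard_ne_zero_of_mem hw

end IsDRG

end NeighborCounts

section DistanceMatrices

variable {W : Type*} {G : SimpleGraph W} {D i : ℕ} {b c : ℕ → ℕ}

lemma distM_zero [DecidableEq W] (hG : G.Connected) : distM G 0 = 1 := by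
  ext x y
  simp [distM, Matrix.one_apply, hG.dist_eq_zero_iff]

variable [Fintype W]

lemma distM_mul_distM_one_apply (G : SimpleGraph W) (i : ℕ) (x y : W) :
    (distM G i * distM G 1) x y = (neighborsAtDist G x y i).ncard := by
  classical
  simp [Matrix.mul_apply, distM, neighborsAtDist, Set.ncard_eq_toFinset_card', G.adj_comm y,
    ← ite_and, Finset.sum_boole, and_comm]

lemma IsDRG.distM_succ_mul_distM_one (hG : IsDRG G D b c) (i : ℕ) :
    distM G (i + 1) * distM G 1 =
      (b i : ℝ) • distM G i + aInt b c (i + 1) • distM G (i + 1)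
        + (c (i + 2) : ℝ) • distM G (i + 2) := by
  ext x y
  rw [distM_mul_distM_one_apply]
  simp only [distM, Matrix.add_apply, Matrix.smul_apply, Matrix.of_apply]
  by_cases hfar : G.dist x y + 1 < i + 1 ∨ i + 2 < G.dist x y
  · rw [neighborsAtDist_eq_empty hfar]
    simp [show G.dist x y ≠ i by lia, show G.dist x y ≠ i + 1 by lia,
      show G.dist x y ≠ i + 2 by lia]
  · have hnear : G.dist x y = i ∨ G.dist x y = i + 1 ∨ G.dist x y = i + 2 := by lia
    rcases hnear with h | h | h
    · simp [h, hG.ncard_neighborsAtDist_succ h]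
    · simp [h, hG.ncard_neighborsAtDist_self h]
    · simp [h, hG.ncard_neighborsAtDist_pred h]

/-- The distance polynomials `p_i`, for which `A_i = p_i(A)` when `i` is at most the diameter.
Beyond the diameter they carry no meaning, as `c i` may vanish there. -/
noncomputable def distPoly (b c : ℕ → ℕ) : ℕ → ℝ[X]
  | 0 => 1
  | 1 => X
  | i + 2 => C (c (i + 2) : ℝ)⁻¹ *
      (distPoly b c (i + 1) * (X - C (aInt b c (i + 1))) - C (b i : ℝ) * distPoly b c i)

theorem IsDRG.aeval_distPoly [DecidableEq W] (hG : IsDRG G D b c) (hi : i ≤ D) :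
    aeval (distM G 1) (distPoly b c i) = distM G i := by
  induction i using Nat.twoStepInduction with
  | zero => simp [distPoly, distM_zero hG.1]
  | one => simp [distPoly]
  | more i ih₀ ih₁ =>
    have c_ne_zero : (c (i + 2) : ℝ) ≠ 0 := Nat.cast_ne_zero.2 (hG.c_succ_ne_zero hi)
    have recurrence : distM G (i + 1) * (distM G 1 - algebraMap ℝ _ (aInt b c (i + 1)))
        - (b i : ℝ) • distM G i = (c (i + 2) : ℝ) • distM G (i + 2) := by
      rw [mul_sub, hG.distM_succ_mul_distM_one, ← Algebra.commutes, ← Algebra.smul_def]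
      abel
    simp only [distPoly, map_mul, map_sub, aeval_C, aeval_X, ih₀ (by lia), ih₁ (by lia)]
    rw [← Algebra.smul_def, ← Algebra.smul_def, recurrence, inv_smul_smul₀ c_ne_zero]

theorem stmt1_general (hG : IsDRG G D b c) {θ : ℝ} {v : W → ℝ} (hv : distM G 1 *ᵥ v = θ • v)
    (w : ℕ → ℝ) :
    (∑ i ∈ Finset.Icc 1 D, w i • distM G i) *ᵥ v =
      (∑ i ∈ Finset.Icc 1 D, w i * (distPoly b c i).eval θ) • v := by
  classical
  rw [Matrix.sum_mulVec, Finset.sum_smul]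
  refine Finset.sum_congr rfl fun i hi ↦ ?_
  rw [Matrix.smul_mulVec, ← hG.aeval_distPoly (Finset.mem_Icc.1 hi).2,
    aeval_mulVec_of_mulVec_eq_smul hv, smul_smul]

end DistanceMatrices

lemma sum_geom_mul_eval_distPoly_three {b c : ℕ → ℕ} (hc₂ : c 2 ≠ 0) (hc₃ : c 3 ≠ 0) {q : ℝ}
    (hq : q ≠ 0) (θ : ℝ) :
    ∑ i ∈ Finset.Icc 1 3, (∑ j ∈ Finset.range i, (1 / q) ^ j) * (distPoly b c i).eval θ =
      (1 / ((c 2 : ℝ) * (c 3 : ℝ) * q ^ 2)) *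
        (((q ^ 2 + q + 1) * aInt b c 2 - (q ^ 2 + q) * (c 3 : ℝ)) * (b 0 : ℝ)
          + (q ^ 2 * (c 2 : ℝ) * (c 3 : ℝ) - (q ^ 2 + q) * aInt b c 1 * (c 3 : ℝ)
              + (q ^ 2 + q + 1) *
                (aInt b c 1 * aInt b c 2 - (b 1 : ℝ) * (c 2 : ℝ) - (b 0 : ℝ))) * θ
          + ((q ^ 2 + q) * (c 3 : ℝ) - (q ^ 2 + q + 1) * (aInt b c 1 + aInt b c 2)) * θ ^ 2
          + (q ^ 2 + q + 1) * θ ^ 3) := by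
  have eval_two : (distPoly b c 2).eval θ = (θ * (θ - aInt b c 1) - b 0) / c 2 := by
    simp [distPoly, div_eq_inv_mul]
  have eval_three : (distPoly b c 3).eval θ =
      ((θ * (θ - aInt b c 1) - b 0) / c 2 * (θ - aInt b c 2) - b 1 * θ) / c 3 := by
    rw [← eval_two]
    simp [distPoly, div_eq_inv_mul]
  rw [Finset.sum_Icc_succ_top (by lia), Finset.sum_Icc_succ_top (by lia), Finset.Icc_self,
    Finset.sum_singleton, eval_two, eval_three]
  simp only [distPoly, eval_X, Finset.sum_range_succ, Finset.sum_range_zero]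
  field_simp
  ring

/-- Proposition 3.1: for a distance-regular graph of diameter 3 with
intersection array `{k, b₁, b₂; 1, c₂, c₃}`, `q ≠ 0`, and a nonzero eigenvector `v` of the
adjacency matrix with eigenvalue `θ`, `v` is an eigenvector of `𝔻_q` with eigenvalue
`R_q(θ)` as given by the cubic polynomial in `θ`. -/
theorem stmt1 (G : SimpleGraph V) (b c : ℕ → ℕ) (hG : IsDRG G 3 b c)
    (q : ℝ) (hq : q ≠ 0) (θ : ℝ) (v : V → ℝ) (hv : v ≠ 0)
    (hAv : (distM G 1).mulVec v = θ • v) :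
    (qDist G 3 q).mulVec v =
      ((1 / ((c 2 : ℝ) * (c 3 : ℝ) * q ^ 2)) *
        (((q ^ 2 + q + 1) * aInt b c 2 - (q ^ 2 + q) * (c 3 : ℝ)) * (b 0 : ℝ)
          + (q ^ 2 * (c 2 : ℝ) * (c 3 : ℝ) - (q ^ 2 + q) * aInt b c 1 * (c 3 : ℝ)
              + (q ^ 2 + q + 1) *
                (aInt b c 1 * aInt b c 2 - (b 1 : ℝ) * (c 2 : ℝ) - (b 0 : ℝ))) * θ
          + ((q ^ 2 + q) * (c 3 : ℝ) - (q ^ 2 + q + 1) * (aInt b c 1 + aInt b c 2)) * θ ^ 2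
          + (q ^ 2 + q + 1) * θ ^ 3)) • v := by
  rw [← sum_geom_mul_eval_distPoly_three (hG.c_succ_ne_zero (i := 1) (by lia))
    (hG.c_succ_ne_zero (i := 2) (by lia)) hq]
  exact stmt1_general hG hAv _
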